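/- Suppose λ > 0 and ψ : V → ℝ satisfies ψ(1) < 0 and the positive-part recursion with parameter λ. Then the following are equivalent: (1) E_ν(ψ,ψ) = λ Var_π(ψ); (2) π(ψ) = 0; (3) λ = λ^G_{π,ν}. Moreover, if n ≥ 3, each of these is also equivalent to (4) E_ν(ψ,ψ) = λ^G_{π,ν} Var_π(ψ). -/

import Mathlib

open Finset

/-- Dirichlet form on the path with vertices `{1,…,n}`;
`ν i` denotes the weight of edge `{i, i+1}`. -/
noncomputable def EForm (n : ℕ) (ν : ℕ → ℝ) (f g : ℕ → ℝ) : ℝ :=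
  ∑ i ∈ Finset.Icc 1 (n - 1), (f i - f (i + 1)) * (g i - g (i + 1)) * ν i

/-- Mean of `f` with respect to `π` on `{1,…,n}`. -/
noncomputable def piMean (n : ℕ) (π : ℕ → ℝ) (f : ℕ → ℝ) : ℝ :=
  ∑ i ∈ Finset.Icc 1 n, f i * π i

/-- Variance of `f` with respect to `π` on `{1,…,n}`. -/
noncomputable def varPi (n : ℕ) (π : ℕ → ℝ) (f : ℕ → ℝ) : ℝ :=
  piMean n π (fun i => (f i) ^ 2) - (piMean n π f) ^ 2

/-- `f` is non-constant on `{1,…,n}`. -/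
def Nonconstant (n : ℕ) (f : ℕ → ℝ) : Prop :=
  ∃ i ∈ Finset.Icc 1 n, ∃ j ∈ Finset.Icc 1 n, f i ≠ f j

/-- `lam` is the spectral gap: the minimum of the Rayleigh quotients over
non-constant functions. -/
def IsSpectralGap (n : ℕ) (π ν : ℕ → ℝ) (lam : ℝ) : Prop :=
  IsLeast {r : ℝ | ∃ f : ℕ → ℝ, Nonconstant n f ∧ r = EForm n ν f f / varPi n π f} lam

/-- The positive-part recursion with parameter `lam`:
`ψ(i+1) = ψ(i) + max{[ψ(i)−ψ(i−1)]ν(i−1,i) − λ π(i) ψ(i), 0}/ν(i,i+1)` for `1 ≤ i < n`. -/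
def PosPartRec (n : ℕ) (π ν : ℕ → ℝ) (lam : ℝ) (ψ : ℕ → ℝ) : Prop :=
  ∀ i, 1 ≤ i → i < n →
    ψ (i + 1) = ψ i + max ((ψ i - ψ (i - 1)) * ν (i - 1) - lam * (π i * ψ i)) 0 / ν i

/-!
Write `Φ(i) = [ψ(i+1) − ψ(i)] ν(i,i+1)`. The balance `Φ(i−1) − Φ(i) = λ π(i) ψ(i)` holds until the
positive part first takes the value `0` from a negative argument, and from there on `ψ` is constant;
so the balance holds wherever `ψ(i) ≠ ψ(n)`. Testing it against `g − g(n)` gives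
`E(ψ,g) = λ [π(ψg) − π(ψ) g(n)]` for every `g` that is constant where `ψ = ψ(n)`.

* With `g = ψ` this reads `E(ψ,ψ) = λ Var(ψ) − λ π(ψ) [ψ(n) − π(ψ)]`, where `ψ(n) > π(ψ)`.
* If `π(ψ) ≤ 0`, then `ψ` is strictly increasing, and for any `f` one may take
  `g(k) = R(k) = ∑_{i<k} [f(i+1) − f(i)]² / [ψ(i+1) − ψ(i)]`. Then `E(ψ,R) = E(f,f)`, while
  Cauchy–Schwarz along the path gives `Var(f) ≤ Cov(ψ,R)`, so
  `λ Var(f) ≤ E(f,f) + λ π(ψ) [R(n) − π(R)]`, where `R(n) > π(R)` unless `f` is constant.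

Together these show that `π(ψ)` has the sign of `λ − λ^G`. Finally, if `ψ` is a minimizer, its
Euler–Lagrange equation `Φ(i−1) − Φ(i) = λ^G π(i) [ψ(i) − π(ψ)]` at `i = n` forces
`ψ(n−1) < ψ(n)`; comparing it with the balance at the two vertices `1, 2 < n` gives `λ = λ^G`.
-/

variable {n : ℕ} {π ν ψ f g : ℕ → ℝ} {lam gap : ℝ}

/-- The covariance of `f` and `g` with respect to `π` on `{1,…,n}`, the polarization of `varPi`. -/
noncomputable def covPi (n : ℕ) (π f g : ℕ → ℝ) : ℝ :=
  piMean n π (fun i => f i * g i) - piMean n π f * piMean n π g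

/-- The flow of `f` through the edge `{i, i+1}`. Its values at `i = 0` and `i = n`, outside the
path, vanish under the convention `ν 0 = ν n = 0`. -/
noncomputable def flux (ν f : ℕ → ℝ) (i : ℕ) : ℝ := (f (i + 1) - f i) * ν i

/-- The energy of `f` on `{1,…,k}` when `ψ` is used as the coordinate along the path, the discrete
`∫ (df/dψ)² dψ`. It is the test function paired with `ψ` in the lower bound for the gap. -/
noncomputable def relativeEnergy (ψ f : ℕ → ℝ) (k : ℕ) : ℝ :=
  ∑ i ∈ Ico 1 k, (f (i + 1) - f i) ^ 2 / (ψ (i + 1) - ψ i)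

section MeanAndCovariance

lemma not_nonconstant_iff : ¬Nonconstant n f ↔ ∀ i ∈ Icc 1 n, ∀ j ∈ Icc 1 n, f i = f j := by
  simp only [Nonconstant, not_exists, not_and, not_not]

lemma piMean_lt_of_monotoneOn (hπ : ∀ i ∈ Icc 1 n, 0 < π i) (hπ1 : ∑ i ∈ Icc 1 n, π i = 1)
    (hf : MonotoneOn f (Set.Icc 1 n)) (h1n : f 1 < f n) : piMean n π f < f n := by
  have hn : 1 ≤ n := by
    by_contra! hn
    simp [Nat.lt_one_iff.1 hn] at hπ1
  have h1 : 1 ∈ Icc 1 n := left_mem_Icc.2 hn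
  calc piMean n π f < ∑ i ∈ Icc 1 n, f n * π i := by
        refine sum_lt_sum (fun i hi => ?_) ⟨1, h1, mul_lt_mul_of_pos_right h1n (hπ 1 h1)⟩
        have hi' := mem_Icc.1 hi
        exact mul_le_mul_of_nonneg_right (hf hi' ⟨hn, le_rfl⟩ hi'.2) (hπ i hi).le
    _ = f n := by rw [← mul_sum, hπ1, mul_one]

-- `piMean k π f` is a partial sum of `piMean n π f`, not a normalized mean over `{1,…,k}`.
lemma piMean_neg_of_monotoneOn (hπ : ∀ i ∈ Icc 1 n, 0 < π i) (hf : MonotoneOn f (Set.Icc 1 n))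
    (hf1 : f 1 < 0) (hmean : piMean n π f ≤ 0) {k : ℕ} (hk : 1 ≤ k) (hkn : k < n) :
    piMean k π f < 0 := by
  have hπ' : ∀ i, 1 ≤ i → i ≤ n → 0 < π i := fun i h1 hin => hπ i (mem_Icc.2 ⟨h1, hin⟩)
  rcases le_or_gt (f k) 0 with hfk | hfk
  · refine sum_neg' (fun i hi => ?_) ⟨1, left_mem_Icc.2 hk, ?_⟩
    · obtain ⟨h1, hik⟩ := mem_Icc.1 hi
      have hfi : f i ≤ 0 := (hf ⟨h1, by omega⟩ ⟨hk, hkn.le⟩ hik).trans hfk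
      exact mul_nonpos_of_nonpos_of_nonneg hfi (hπ' i h1 (by omega)).le
    · exact mul_neg_of_neg_of_pos hf1 (hπ' 1 le_rfl (by omega))
  · have hpos : ∀ i, k ≤ i → i ≤ n → 0 < f i * π i := fun i hki hin =>
      mul_pos (hfk.trans_le (hf ⟨hk, hkn.le⟩ ⟨by omega, hin⟩ hki)) (hπ' i (by omega) hin)
    have hlt : piMean k π f < piMean n π f := by
      refine sum_lt_sum_of_subset (Icc_subset_Icc_right hkn.le) (right_mem_Icc.2 (by omega))
        (by simp [hkn]) (hpos n hkn.le le_rfl) fun i hi hik => ?_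
      simp only [mem_Icc] at hi hik
      exact (hpos i (by omega) hi.2).le
    exact hlt.trans_le hmean

lemma varPi_eq_covPi (n : ℕ) (π f : ℕ → ℝ) : varPi n π f = covPi n π f f := by
  simp only [varPi, covPi, sq]

lemma sum_sum_mul_sub_mul_sub (hπ1 : ∑ i ∈ Icc 1 n, π i = 1) (f g : ℕ → ℝ) :
    ∑ x ∈ Icc 1 n, ∑ y ∈ Icc 1 n, π x * π y * ((f y - f x) * (g y - g x)) =
      2 * covPi n π f g := by
  have inner (x : ℕ) : ∑ y ∈ Icc 1 n, π x * π y * ((f y - f x) * (g y - g x)) =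
      π x * piMean n π (fun i => f i * g i) - g x * π x * piMean n π f -
        f x * π x * piMean n π g + f x * g x * π x * ∑ y ∈ Icc 1 n, π y := by
    simp only [piMean, mul_sum, ← sum_sub_distrib, ← sum_add_distrib]
    exact sum_congr rfl fun y _ => by ring
  simp only [inner, sum_add_distrib, sum_sub_distrib, ← sum_mul, hπ1, covPi, piMean]
  ring

lemma varPi_le_covPi (hπ : ∀ i ∈ Icc 1 n, 0 < π i) (hπ1 : ∑ i ∈ Icc 1 n, π i = 1) {u v : ℕ → ℝ}
    (h : ∀ x y, 1 ≤ x → x ≤ y → y ≤ n → (f y - f x) ^ 2 ≤ (u y - u x) * (v y - v x)) :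
    varPi n π f ≤ covPi n π u v := by
  suffices 2 * covPi n π f f ≤ 2 * covPi n π u v by
    rw [varPi_eq_covPi]
    linarith
  rw [← sum_sum_mul_sub_mul_sub hπ1, ← sum_sum_mul_sub_mul_sub hπ1]
  refine sum_le_sum fun x hx => sum_le_sum fun y hy =>
    mul_le_mul_of_nonneg_left ?_ (mul_pos (hπ x hx) (hπ y hy)).le
  obtain ⟨hx1, hxn⟩ := mem_Icc.1 hx
  obtain ⟨hy1, hyn⟩ := mem_Icc.1 hy
  rcases le_total x y with hxy | hyx
  · linarith [h x y hx1 hxy hyn]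
  · linarith [h y x hy1 hyx hxn]

lemma varPi_pos (hπ : ∀ i ∈ Icc 1 n, 0 < π i) (hπ1 : ∑ i ∈ Icc 1 n, π i = 1)
    (hf : Nonconstant n f) : 0 < varPi n π f := by
  obtain ⟨i, hi, j, hj, hij⟩ := hf
  have nonneg : ∀ x ∈ Icc 1 n, ∀ y ∈ Icc 1 n, 0 ≤ π x * π y * ((f y - f x) * (f y - f x)) :=
    fun x hx y hy => mul_nonneg (mul_pos (hπ x hx) (hπ y hy)).le (mul_self_nonneg _)
  have pos : 0 < π i * π j * ((f j - f i) * (f j - f i)) :=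
    mul_pos (mul_pos (hπ i hi) (hπ j hj)) (mul_self_pos.2 (sub_ne_zero.2 hij.symm))
  have : 0 < 2 * covPi n π f f := by
    rw [← sum_sum_mul_sub_mul_sub hπ1]
    exact sum_pos' (fun x hx => sum_nonneg (nonneg x hx))
      ⟨i, hi, sum_pos' (nonneg i hi) ⟨j, hj, pos⟩⟩
  rw [varPi_eq_covPi]
  linarith

lemma varPi_eq_zero_of_not_nonconstant (hπ1 : ∑ i ∈ Icc 1 n, π i = 1) (hf : ¬Nonconstant n f) :
    varPi n π f = 0 := by
  have : 2 * covPi n π f f = 0 := by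
    rw [← sum_sum_mul_sub_mul_sub hπ1]
    refine sum_eq_zero fun x hx => sum_eq_zero fun y hy => ?_
    rw [not_nonconstant_iff.1 hf y hy x hx, sub_self, mul_zero, mul_zero]
  rw [varPi_eq_covPi]
  linarith

lemma varPi_add_mul (n : ℕ) (π f g : ℕ → ℝ) (t : ℝ) :
    varPi n π (fun i => f i + t * g i) =
      varPi n π f + 2 * t * covPi n π f g + t ^ 2 * varPi n π g := by
  have mean : piMean n π (fun i => f i + t * g i) = piMean n π f + t * piMean n π g := by
    simp only [piMean, mul_sum, ← sum_add_distrib]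
    exact sum_congr rfl fun i _ => by ring
  have mean_sq : piMean n π (fun i => (f i + t * g i) ^ 2) = piMean n π (fun i => f i ^ 2) +
      2 * t * piMean n π (fun i => f i * g i) + t ^ 2 * piMean n π (fun i => g i ^ 2) := by
    simp only [piMean, mul_sum, ← sum_add_distrib]
    exact sum_congr rfl fun i _ => by ring
  rw [varPi, mean, mean_sq, varPi, varPi, covPi]
  ring

lemma covPi_single {i : ℕ} (hi : i ∈ Icc 1 n) (π f : ℕ → ℝ) :
    covPi n π f (Pi.single i 1) = π i * (f i - piMean n π f) := by
  have mean_mul (u : ℕ → ℝ) :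
      piMean n π (fun j => u j * (Pi.single i 1 : ℕ → ℝ) j) = u i * π i := by
    rw [piMean, sum_eq_single_of_mem i hi fun j _ hj => by simp [hj], Pi.single_eq_same, mul_one]
  have mean : piMean n π (Pi.single i 1) = π i := by simpa using mean_mul 1
  rw [covPi, mean_mul, mean]
  ring

end MeanAndCovariance

section DirichletForm

lemma sum_Icc_mul_succ_sub (a g : ℕ → ℝ) (k : ℕ) :
    ∑ i ∈ Icc 1 k, a i * (g (i + 1) - g i) =
      ∑ i ∈ Icc 1 k, (a (i - 1) - a i) * g i + a k * g (k + 1) - a 0 * g 1 := by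
  induction k with
  | zero => simp
  | succ k ih =>
    rw [sum_Icc_succ_top (by omega), sum_Icc_succ_top (by omega), ih, Nat.add_sub_cancel]
    ring

lemma EForm_eq_sum_flux_mul (n : ℕ) (ν f g : ℕ → ℝ) :
    EForm n ν f g = ∑ i ∈ Icc 1 (n - 1), flux ν f i * (g (i + 1) - g i) :=
  sum_congr rfl fun i _ => by rw [flux]; ring

lemma EForm_eq_sum_flux_sub_mul (hν0 : ν 0 = 0) (hνn : ν n = 0) (f g : ℕ → ℝ) :
    EForm n ν f g = ∑ i ∈ Icc 1 n, (flux ν f (i - 1) - flux ν f i) * g i := by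
  rw [EForm_eq_sum_flux_mul]
  cases n with
  | zero => simp
  | succ k =>
    rw [Nat.add_sub_cancel, sum_Icc_mul_succ_sub, sum_Icc_succ_top (by omega), Nat.add_sub_cancel]
    simp [flux, hν0, hνn]

lemma EForm_sub_const_right (n : ℕ) (ν f g : ℕ → ℝ) (c : ℝ) :
    EForm n ν f (fun i => g i - c) = EForm n ν f g := by
  simp only [EForm, sub_sub_sub_cancel_right]

lemma EForm_add_mul (n : ℕ) (ν f g : ℕ → ℝ) (t : ℝ) :
    EForm n ν (fun i => f i + t * g i) (fun i => f i + t * g i) =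
      EForm n ν f f + 2 * t * EForm n ν f g + t ^ 2 * EForm n ν g g := by
  simp only [EForm, mul_sum, ← sum_add_distrib]
  exact sum_congr rfl fun i _ => by ring

lemma EForm_single (hν0 : ν 0 = 0) (hνn : ν n = 0) {i : ℕ} (hi : i ∈ Icc 1 n) (f : ℕ → ℝ) :
    EForm n ν f (Pi.single i 1) = flux ν f (i - 1) - flux ν f i := by
  rw [EForm_eq_sum_flux_sub_mul hν0 hνn, sum_eq_single_of_mem i hi fun j _ hj => by simp [hj],
    Pi.single_eq_same, mul_one]

lemma EForm_self_pos (hν : ∀ i ∈ Icc 1 (n - 1), 0 < ν i) {i : ℕ} (hi : i ∈ Icc 1 (n - 1))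
    (hf : f i ≠ f (i + 1)) : 0 < EForm n ν f f :=
  sum_pos' (fun j hj => mul_nonneg (mul_self_nonneg _) (hν j hj).le)
    ⟨i, hi, mul_pos (mul_self_pos.2 (sub_ne_zero.2 hf)) (hν i hi)⟩

lemma EForm_self_eq_zero_of_not_nonconstant (ν : ℕ → ℝ) (hf : ¬Nonconstant n f) :
    EForm n ν f f = 0 := by
  refine sum_eq_zero fun i hi => ?_
  obtain ⟨h1, hin⟩ := mem_Icc.1 hi
  rw [not_nonconstant_iff.1 hf i (mem_Icc.2 ⟨h1, by omega⟩) (i + 1)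
    (mem_Icc.2 ⟨by omega, by omega⟩), sub_self, zero_mul, zero_mul]

lemma flux_pos_iff {i : ℕ} (hν : 0 < ν i) : 0 < flux ν f i ↔ f i < f (i + 1) := by
  rw [flux, mul_pos_iff_of_pos_right hν, sub_pos]

end DirichletForm

namespace IsSpectralGap

lemma mul_varPi_le_EForm (hgap : IsSpectralGap n π ν gap) (hπ : ∀ i ∈ Icc 1 n, 0 < π i)
    (hπ1 : ∑ i ∈ Icc 1 n, π i = 1) (f : ℕ → ℝ) :
    gap * varPi n π f ≤ EForm n ν f f := by
  by_cases hf : Nonconstant n f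
  · exact (le_div_iff₀ (varPi_pos hπ hπ1 hf)).1 (hgap.2 ⟨f, hf, rfl⟩)
  · rw [varPi_eq_zero_of_not_nonconstant hπ1 hf, EForm_self_eq_zero_of_not_nonconstant ν hf,
      mul_zero]

lemma exists_minimizer (hgap : IsSpectralGap n π ν gap) (hπ : ∀ i ∈ Icc 1 n, 0 < π i)
    (hπ1 : ∑ i ∈ Icc 1 n, π i = 1) :
    ∃ f, Nonconstant n f ∧ EForm n ν f f = gap * varPi n π f := by
  obtain ⟨f, hf, h⟩ := hgap.1
  exact ⟨f, hf, ((eq_div_iff (varPi_pos hπ hπ1 hf).ne').1 h).symm⟩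

lemma EForm_eq_mul_covPi_of_minimizer (hgap : IsSpectralGap n π ν gap)
    (hπ : ∀ i ∈ Icc 1 n, 0 < π i) (hπ1 : ∑ i ∈ Icc 1 n, π i = 1)
    (hf : EForm n ν f f = gap * varPi n π f) (g : ℕ → ℝ) :
    EForm n ν f g = gap * covPi n π f g := by
  have quadratic_nonneg (t : ℝ) : 0 ≤ (EForm n ν g g - gap * varPi n π g) * (t * t) +
      2 * (EForm n ν f g - gap * covPi n π f g) * t + 0 := by
    have := hgap.mul_varPi_le_EForm hπ hπ1 (fun i => f i + t * g i)
    rw [EForm_add_mul, varPi_add_mul, hf] at this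
    linarith
  have discrim_nonpos := discrim_le_zero quadratic_nonneg
  rw [discrim, mul_zero, sub_zero] at discrim_nonpos
  linarith [sq_nonpos_iff _ |>.1 discrim_nonpos]

lemma flux_sub_flux_of_minimizer (hgap : IsSpectralGap n π ν gap) (hπ : ∀ i ∈ Icc 1 n, 0 < π i)
    (hπ1 : ∑ i ∈ Icc 1 n, π i = 1) (hν0 : ν 0 = 0) (hνn : ν n = 0)
    (hf : EForm n ν f f = gap * varPi n π f) {i : ℕ} (hi : i ∈ Icc 1 n) :
    flux ν f (i - 1) - flux ν f i = gap * (π i * (f i - piMean n π f)) := by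
  rw [← EForm_single hν0 hνn hi, hgap.EForm_eq_mul_covPi_of_minimizer hπ hπ1 hf, covPi_single hi]

end IsSpectralGap

section RelativeEnergy

lemma relativeEnergy_one (ψ f : ℕ → ℝ) : relativeEnergy ψ f 1 = 0 := by
  rw [relativeEnergy, Ico_self, sum_empty]

lemma relativeEnergy_sub (ψ f : ℕ → ℝ) {x y : ℕ} (hx : 1 ≤ x) (hxy : x ≤ y) :
    relativeEnergy ψ f y - relativeEnergy ψ f x =
      ∑ i ∈ Ico x y, (f (i + 1) - f i) ^ 2 / (ψ (i + 1) - ψ i) := by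
  rw [relativeEnergy, relativeEnergy, ← sum_Ico_consecutive _ hx hxy, add_sub_cancel_left]

lemma relativeEnergy_monotoneOn (hψ : MonotoneOn ψ (Set.Icc 1 n)) (f : ℕ → ℝ) :
    MonotoneOn (relativeEnergy ψ f) (Set.Icc 1 n) := by
  rintro x ⟨hx, _⟩ y ⟨_, hy⟩ hxy
  rw [← sub_nonneg, relativeEnergy_sub ψ f hx hxy]
  refine sum_nonneg fun i hi => div_nonneg (sq_nonneg _) (sub_nonneg.2 ?_)
  obtain ⟨hxi, hiy⟩ := mem_Ico.1 hi
  exact hψ ⟨by omega, by omega⟩ ⟨by omega, by omega⟩ i.le_succ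

lemma sq_sub_le_mul_relativeEnergy_sub (hψ : StrictMonoOn ψ (Set.Icc 1 n)) (f : ℕ → ℝ) {x y : ℕ}
    (hx : 1 ≤ x) (hxy : x ≤ y) (hy : y ≤ n) :
    (f y - f x) ^ 2 ≤ (ψ y - ψ x) * (relativeEnergy ψ f y - relativeEnergy ψ f x) := by
  have hpos : ∀ i ∈ Ico x y, 0 < ψ (i + 1) - ψ i := fun i hi => by
    obtain ⟨hxi, hiy⟩ := mem_Ico.1 hi
    exact sub_pos.2 (hψ ⟨by omega, by omega⟩ ⟨by omega, by omega⟩ i.lt_succ_self)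
  rw [relativeEnergy_sub ψ f hx hxy, ← sum_Ico_sub f hxy, ← sum_Ico_sub ψ hxy]
  exact sum_sq_le_sum_mul_sum_of_sq_le_mul _ (fun i hi => (hpos i hi).le)
    (fun i hi => div_nonneg (sq_nonneg _) (hpos i hi).le)
    fun i hi => (mul_div_cancel₀ _ (hpos i hi).ne').ge

lemma relativeEnergy_pos (hψ : StrictMonoOn ψ (Set.Icc 1 n)) (hf : Nonconstant n f) :
    0 < relativeEnergy ψ f n := by
  by_contra! hle
  have eq_one : ∀ i ∈ Icc 1 n, f i = f 1 := fun i hi => by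
    obtain ⟨h1, hin⟩ := mem_Icc.1 hi
    have henergy : relativeEnergy ψ f i ≤ 0 :=
      (relativeEnergy_monotoneOn hψ.monotoneOn f ⟨h1, hin⟩ ⟨by omega, le_rfl⟩ hin).trans hle
    have hψi : 0 ≤ ψ i - ψ 1 := sub_nonneg.2 (hψ.monotoneOn ⟨le_rfl, by omega⟩ ⟨h1, hin⟩ h1)
    have hsq := sq_sub_le_mul_relativeEnergy_sub hψ f le_rfl h1 hin
    rw [relativeEnergy_one, sub_zero] at hsq
    exact sub_eq_zero.1 (sq_nonpos_iff _ |>.1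
      (hsq.trans (mul_nonpos_of_nonneg_of_nonpos hψi henergy)))
  exact not_nonconstant_iff.2 (fun i hi j hj => (eq_one i hi).trans (eq_one j hj).symm) hf

lemma piMean_relativeEnergy_lt (hπ : ∀ i ∈ Icc 1 n, 0 < π i) (hπ1 : ∑ i ∈ Icc 1 n, π i = 1)
    (hψ : StrictMonoOn ψ (Set.Icc 1 n)) (hf : Nonconstant n f) :
    piMean n π (relativeEnergy ψ f) < relativeEnergy ψ f n :=
  piMean_lt_of_monotoneOn hπ hπ1 (relativeEnergy_monotoneOn hψ.monotoneOn f)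
    ((relativeEnergy_one ψ f).trans_lt (relativeEnergy_pos hψ hf))

lemma EForm_relativeEnergy (hψ : StrictMonoOn ψ (Set.Icc 1 n)) (ν f : ℕ → ℝ) :
    EForm n ν ψ (relativeEnergy ψ f) = EForm n ν f f := by
  rw [EForm_eq_sum_flux_mul]
  refine sum_congr rfl fun i hi => ?_
  obtain ⟨h1, hin⟩ := mem_Icc.1 hi
  have hne : ψ (i + 1) - ψ i ≠ 0 :=
    (sub_pos.2 (hψ ⟨h1, by omega⟩ ⟨by omega, by omega⟩ i.lt_succ_self)).ne'
  rw [relativeEnergy_sub ψ f h1 i.le_succ, Nat.Ico_succ_singleton, sum_singleton, flux]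
  field_simp
  ring

end RelativeEnergy

namespace PosPartRec

lemma le_succ (hrec : PosPartRec n π ν lam ψ) (hν : ∀ i ∈ Icc 1 (n - 1), 0 < ν i) {i : ℕ}
    (h1 : 1 ≤ i) (hin : i < n) : ψ i ≤ ψ (i + 1) := by
  rw [hrec i h1 hin]
  exact le_add_of_nonneg_right
    (div_nonneg (le_max_right _ _) (hν i (mem_Icc.2 ⟨h1, by omega⟩)).le)

lemma monotoneOn (hrec : PosPartRec n π ν lam ψ) (hν : ∀ i ∈ Icc 1 (n - 1), 0 < ν i) :
    MonotoneOn ψ (Set.Icc 1 n) :=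
  monotoneOn_of_le_add_one Set.ordConnected_Icc fun _ _ hi hi' => hrec.le_succ hν hi.1 hi'.2

lemma flux_eq_max (hrec : PosPartRec n π ν lam ψ) (hν : ∀ i ∈ Icc 1 (n - 1), 0 < ν i) {i : ℕ}
    (h1 : 1 ≤ i) (hin : i < n) :
    flux ν ψ i = max (flux ν ψ (i - 1) - lam * (π i * ψ i)) 0 := by
  have hνi := hν i (mem_Icc.2 ⟨h1, by omega⟩)
  rw [flux, flux, hrec i h1 hin, Nat.sub_add_cancel h1, add_sub_cancel_left,
    div_mul_cancel₀ _ hνi.ne']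

lemma flux_nonneg (hrec : PosPartRec n π ν lam ψ) (hν : ∀ i ∈ Icc 1 (n - 1), 0 < ν i)
    (hν0 : ν 0 = 0) {i : ℕ} (hin : i < n) : 0 ≤ flux ν ψ i := by
  rcases Nat.eq_zero_or_pos i with rfl | h1
  · rw [flux, hν0, mul_zero]
  · rw [hrec.flux_eq_max hν h1 hin]
    exact le_max_right _ _

lemma eq_last_of_succ_eq (hrec : PosPartRec n π ν lam ψ) (hπ : ∀ i ∈ Icc 1 n, 0 < π i)
    (hlam : 0 < lam) {i : ℕ} (hin : i < n) (hpos : 0 < ψ i) (heq : ψ (i + 1) = ψ i) :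
    ψ i = ψ n := by
  suffices ∀ j, i ≤ j → j < n → ψ (j + 1) = ψ j ∧ ψ j = ψ i by
    obtain ⟨hlast, hi⟩ := this (n - 1) (by omega) (by omega)
    rw [← hi, ← hlast, Nat.sub_add_cancel (by omega)]
  intro j hij
  induction j, hij using Nat.le_induction with
  | base => exact fun _ => ⟨heq, rfl⟩
  | succ j _ ih =>
    intro hj
    obtain ⟨hsucc, hji⟩ := ih (by omega)
    have hψ : ψ (j + 1) = ψ i := hsucc.trans hji
    have hreaction : 0 ≤ lam * (π (j + 1) * ψ (j + 1)) := by
      rw [hψ]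
      exact (mul_pos hlam (mul_pos (hπ _ (mem_Icc.2 ⟨by omega, hj.le⟩)) hpos)).le
    refine ⟨?_, hψ⟩
    rw [hrec (j + 1) (by omega) hj, Nat.add_sub_cancel, sub_eq_zero.2 hsucc, zero_mul, zero_sub,
      max_eq_right (neg_nonpos.2 hreaction), zero_div, add_zero]

lemma eq_last_or_flux_sub_flux (hrec : PosPartRec n π ν lam ψ) (hπ : ∀ i ∈ Icc 1 n, 0 < π i)
    (hν : ∀ i ∈ Icc 1 (n - 1), 0 < ν i) (hν0 : ν 0 = 0) (hlam : 0 < lam) {i : ℕ}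
    (hi : i ∈ Icc 1 n) :
    ψ i = ψ n ∨ flux ν ψ (i - 1) - flux ν ψ i = lam * (π i * ψ i) := by
  obtain ⟨h1, hin⟩ := mem_Icc.1 hi
  rcases hin.eq_or_lt with rfl | hin
  · exact .inl rfl
  have hflux := hrec.flux_eq_max hν h1 hin
  rcases le_or_gt 0 (flux ν ψ (i - 1) - lam * (π i * ψ i)) with hactive | hclipped
  · right
    rw [hflux, max_eq_left hactive, sub_sub_cancel]
  · left
    have hreaction : 0 < lam * (π i * ψ i) := by
      linarith [hrec.flux_nonneg hν hν0 (i := i - 1) (by omega)]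
    have hpos : 0 < ψ i :=
      (mul_pos_iff_of_pos_left (hπ i hi)).1 ((mul_pos_iff_of_pos_left hlam).1 hreaction)
    have hzero : (ψ (i + 1) - ψ i) * ν i = 0 := by
      rw [← flux, hflux, max_eq_right hclipped.le]
    have hνi : ν i ≠ 0 := (hν i (mem_Icc.2 ⟨h1, by omega⟩)).ne'
    exact hrec.eq_last_of_succ_eq hπ hlam hin hpos
      (sub_eq_zero.1 ((mul_eq_zero.1 hzero).resolve_right hνi))

lemma EForm_eq (hrec : PosPartRec n π ν lam ψ) (hπ : ∀ i ∈ Icc 1 n, 0 < π i)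
    (hν : ∀ i ∈ Icc 1 (n - 1), 0 < ν i) (hν0 : ν 0 = 0) (hνn : ν n = 0) (hlam : 0 < lam)
    (hg : ∀ i ∈ Icc 1 n, ψ i = ψ n → g i = g n) :
    EForm n ν ψ g = lam * (piMean n π (fun i => ψ i * g i) - piMean n π ψ * g n) :=
  calc EForm n ν ψ g = EForm n ν ψ (fun i => g i - g n) := (EForm_sub_const_right ..).symm
    _ = ∑ i ∈ Icc 1 n, (flux ν ψ (i - 1) - flux ν ψ i) * (g i - g n) :=
      EForm_eq_sum_flux_sub_mul hν0 hνn _ _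
    _ = ∑ i ∈ Icc 1 n, lam * (π i * ψ i) * (g i - g n) := by
      refine sum_congr rfl fun i hi => ?_
      rcases hrec.eq_last_or_flux_sub_flux hπ hν hν0 hlam hi with hlast | hbalance
      · rw [hg i hi hlast, sub_self, mul_zero, mul_zero]
      · rw [hbalance]
    _ = lam * (piMean n π (fun i => ψ i * g i) - piMean n π ψ * g n) := by
      simp only [piMean, mul_sub, mul_sum, sum_mul, ← sum_sub_distrib]
      exact sum_congr rfl fun i _ => by ring

lemma EForm_self_eq (hrec : PosPartRec n π ν lam ψ) (hπ : ∀ i ∈ Icc 1 n, 0 < π i)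
    (hν : ∀ i ∈ Icc 1 (n - 1), 0 < ν i) (hν0 : ν 0 = 0) (hνn : ν n = 0) (hlam : 0 < lam) :
    EForm n ν ψ ψ = lam * varPi n π ψ - lam * (piMean n π ψ * (ψ n - piMean n π ψ)) := by
  rw [hrec.EForm_eq hπ hν hν0 hνn hlam fun _ _ => id, varPi_eq_covPi, covPi]
  ring

lemma one_lt_two (hrec : PosPartRec n π ν lam ψ) (hn : 2 ≤ n) (hπ : ∀ i ∈ Icc 1 n, 0 < π i)
    (hν : ∀ i ∈ Icc 1 (n - 1), 0 < ν i) (hν0 : ν 0 = 0) (hlam : 0 < lam) (hψ1 : ψ 1 < 0) :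
    ψ 1 < ψ 2 := by
  rw [← flux_pos_iff (hν 1 (mem_Icc.2 ⟨le_rfl, by omega⟩)), hrec.flux_eq_max hν le_rfl (by omega)]
  have hreaction : lam * (π 1 * ψ 1) < 0 :=
    mul_neg_of_pos_of_neg hlam
      (mul_neg_of_pos_of_neg (hπ 1 (mem_Icc.2 ⟨le_rfl, by omega⟩)) hψ1)
  simpa [flux, hν0] using hreaction

lemma one_lt_last (hrec : PosPartRec n π ν lam ψ) (hn : 2 ≤ n) (hπ : ∀ i ∈ Icc 1 n, 0 < π i)
    (hν : ∀ i ∈ Icc 1 (n - 1), 0 < ν i) (hν0 : ν 0 = 0) (hlam : 0 < lam) (hψ1 : ψ 1 < 0) :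
    ψ 1 < ψ n :=
  (hrec.one_lt_two hn hπ hν hν0 hlam hψ1).trans_le
    (hrec.monotoneOn hν ⟨by omega, hn⟩ ⟨by omega, le_rfl⟩ hn)

lemma nonconstant (hrec : PosPartRec n π ν lam ψ) (hn : 2 ≤ n) (hπ : ∀ i ∈ Icc 1 n, 0 < π i)
    (hν : ∀ i ∈ Icc 1 (n - 1), 0 < ν i) (hν0 : ν 0 = 0) (hlam : 0 < lam) (hψ1 : ψ 1 < 0) :
    Nonconstant n ψ :=
  ⟨1, left_mem_Icc.2 (by omega), n, right_mem_Icc.2 (by omega),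
    (hrec.one_lt_last hn hπ hν hν0 hlam hψ1).ne⟩

lemma piMean_lt_last (hrec : PosPartRec n π ν lam ψ) (hn : 2 ≤ n)
    (hπ : ∀ i ∈ Icc 1 n, 0 < π i) (hπ1 : ∑ i ∈ Icc 1 n, π i = 1)
    (hν : ∀ i ∈ Icc 1 (n - 1), 0 < ν i) (hν0 : ν 0 = 0) (hlam : 0 < lam) (hψ1 : ψ 1 < 0) :
    piMean n π ψ < ψ n :=
  piMean_lt_of_monotoneOn hπ hπ1 (hrec.monotoneOn hν)
    (hrec.one_lt_last hn hπ hν hν0 hlam hψ1)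

lemma EForm_self_eq_iff (hrec : PosPartRec n π ν lam ψ) (hn : 2 ≤ n)
    (hπ : ∀ i ∈ Icc 1 n, 0 < π i) (hπ1 : ∑ i ∈ Icc 1 n, π i = 1)
    (hν : ∀ i ∈ Icc 1 (n - 1), 0 < ν i) (hν0 : ν 0 = 0) (hνn : ν n = 0) (hlam : 0 < lam)
    (hψ1 : ψ 1 < 0) :
    EForm n ν ψ ψ = lam * varPi n π ψ ↔ piMean n π ψ = 0 := by
  have hlast : ψ n - piMean n π ψ ≠ 0 :=
    (sub_pos.2 (hrec.piMean_lt_last hn hπ hπ1 hν hν0 hlam hψ1)).ne'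
  rw [hrec.EForm_self_eq hπ hν hν0 hνn hlam, sub_eq_self, mul_eq_zero_iff_left hlam.ne',
    mul_eq_zero_iff_right hlast]

lemma neg_mul_piMean_le_flux (hrec : PosPartRec n π ν lam ψ)
    (hν : ∀ i ∈ Icc 1 (n - 1), 0 < ν i) (hν0 : ν 0 = 0) {k : ℕ} (hk : k < n) :
    -(lam * piMean k π ψ) ≤ flux ν ψ k := by
  induction k with
  | zero => simp [piMean, flux, hν0]
  | succ k ih =>
    calc -(lam * piMean (k + 1) π ψ)
        = -(lam * piMean k π ψ) - lam * (π (k + 1) * ψ (k + 1)) := by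
          rw [piMean, sum_Icc_succ_top (by omega), ← piMean]
          ring
      _ ≤ flux ν ψ k - lam * (π (k + 1) * ψ (k + 1)) := sub_le_sub_right (ih (by omega)) _
      _ ≤ flux ν ψ (k + 1) := by
          rw [hrec.flux_eq_max hν (by omega) hk, Nat.add_sub_cancel]
          exact le_max_left _ _

lemma strictMonoOn_of_piMean_nonpos (hrec : PosPartRec n π ν lam ψ)
    (hπ : ∀ i ∈ Icc 1 n, 0 < π i) (hν : ∀ i ∈ Icc 1 (n - 1), 0 < ν i) (hν0 : ν 0 = 0)
    (hlam : 0 < lam) (hψ1 : ψ 1 < 0) (hmean : piMean n π ψ ≤ 0) :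
    StrictMonoOn ψ (Set.Icc 1 n) := by
  refine strictMonoOn_of_lt_add_one Set.ordConnected_Icc fun i _ ⟨h1, _⟩ ⟨_, hin⟩ => ?_
  rw [← flux_pos_iff (hν i (mem_Icc.2 ⟨h1, by omega⟩))]
  have hpartial : piMean i π ψ < 0 :=
    piMean_neg_of_monotoneOn hπ (hrec.monotoneOn hν) hψ1 hmean h1 hin
  exact (neg_pos.2 (mul_neg_of_pos_of_neg hlam hpartial)).trans_le
    (hrec.neg_mul_piMean_le_flux hν hν0 hin)

lemma mul_varPi_le_EForm_add (hrec : PosPartRec n π ν lam ψ) (hπ : ∀ i ∈ Icc 1 n, 0 < π i)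
    (hπ1 : ∑ i ∈ Icc 1 n, π i = 1) (hν : ∀ i ∈ Icc 1 (n - 1), 0 < ν i) (hν0 : ν 0 = 0)
    (hνn : ν n = 0) (hlam : 0 < lam) (hψ : StrictMonoOn ψ (Set.Icc 1 n)) (f : ℕ → ℝ) :
    lam * varPi n π f ≤ EForm n ν f f +
      lam * (piMean n π ψ * (relativeEnergy ψ f n - piMean n π (relativeEnergy ψ f))) := by
  set R := relativeEnergy ψ f
  have hR : ∀ i ∈ Icc 1 n, ψ i = ψ n → R i = R n := fun i hi h => by
    obtain ⟨h1, hin⟩ := mem_Icc.1 hi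
    rw [hψ.injOn ⟨h1, hin⟩ ⟨by omega, le_rfl⟩ h]
  calc lam * varPi n π f ≤ lam * covPi n π ψ R :=
        mul_le_mul_of_nonneg_left (varPi_le_covPi hπ hπ1 fun _ _ hx hxy hy =>
          sq_sub_le_mul_relativeEnergy_sub hψ f hx hxy hy) hlam.le
    _ = EForm n ν ψ R + lam * (piMean n π ψ * (R n - piMean n π R)) := by
        rw [hrec.EForm_eq hπ hν hν0 hνn hlam hR, covPi]
        ring
    _ = EForm n ν f f + lam * (piMean n π ψ * (R n - piMean n π R)) := by
        rw [EForm_relativeEnergy hψ]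

lemma mul_varPi_le_EForm (hrec : PosPartRec n π ν lam ψ) (hπ : ∀ i ∈ Icc 1 n, 0 < π i)
    (hπ1 : ∑ i ∈ Icc 1 n, π i = 1) (hν : ∀ i ∈ Icc 1 (n - 1), 0 < ν i) (hν0 : ν 0 = 0)
    (hνn : ν n = 0) (hlam : 0 < lam) (hψ1 : ψ 1 < 0) (hmean : piMean n π ψ ≤ 0) (f : ℕ → ℝ) :
    lam * varPi n π f ≤ EForm n ν f f := by
  by_cases hf : Nonconstant n f
  · have hψ := hrec.strictMonoOn_of_piMean_nonpos hπ hν hν0 hlam hψ1 hmean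
    have hR := piMean_relativeEnergy_lt hπ hπ1 hψ hf
    exact (hrec.mul_varPi_le_EForm_add hπ hπ1 hν hν0 hνn hlam hψ f).trans <|
      add_le_of_nonpos_right <| mul_nonpos_of_nonneg_of_nonpos hlam.le <|
        mul_nonpos_of_nonpos_of_nonneg hmean (sub_pos.2 hR).le
  · rw [varPi_eq_zero_of_not_nonconstant hπ1 hf, EForm_self_eq_zero_of_not_nonconstant ν hf,
      mul_zero]

lemma mul_varPi_lt_EForm (hrec : PosPartRec n π ν lam ψ) (hπ : ∀ i ∈ Icc 1 n, 0 < π i)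
    (hπ1 : ∑ i ∈ Icc 1 n, π i = 1) (hν : ∀ i ∈ Icc 1 (n - 1), 0 < ν i) (hν0 : ν 0 = 0)
    (hνn : ν n = 0) (hlam : 0 < lam) (hψ1 : ψ 1 < 0) (hmean : piMean n π ψ < 0)
    (hf : Nonconstant n f) : lam * varPi n π f < EForm n ν f f := by
  have hψ := hrec.strictMonoOn_of_piMean_nonpos hπ hν hν0 hlam hψ1 hmean.le
  have hR := piMean_relativeEnergy_lt hπ hπ1 hψ hf
  exact (hrec.mul_varPi_le_EForm_add hπ hπ1 hν hν0 hνn hlam hψ f).trans_lt <|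
    add_lt_of_neg_right _ <| mul_neg_of_pos_of_neg hlam <|
      mul_neg_of_neg_of_pos hmean (sub_pos.2 hR)

lemma piMean_nonneg_iff (hrec : PosPartRec n π ν lam ψ) (hn : 2 ≤ n)
    (hπ : ∀ i ∈ Icc 1 n, 0 < π i) (hπ1 : ∑ i ∈ Icc 1 n, π i = 1)
    (hν : ∀ i ∈ Icc 1 (n - 1), 0 < ν i) (hν0 : ν 0 = 0) (hνn : ν n = 0) (hlam : 0 < lam)
    (hψ1 : ψ 1 < 0) (hgap : IsSpectralGap n π ν gap) :
    0 ≤ piMean n π ψ ↔ gap ≤ lam := by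
  constructor
  · intro hmean
    have hlast := hrec.piMean_lt_last hn hπ hπ1 hν hν0 hlam hψ1
    have hvar := varPi_pos hπ hπ1 (hrec.nonconstant hn hπ hν hν0 hlam hψ1)
    refine le_of_mul_le_mul_right ((hgap.mul_varPi_le_EForm hπ hπ1 ψ).trans ?_) hvar
    rw [hrec.EForm_self_eq hπ hν hν0 hνn hlam]
    exact sub_le_self _ (mul_nonneg hlam.le (mul_nonneg hmean (sub_pos.2 hlast).le))
  · contrapose!
    intro hmean
    obtain ⟨f, hf, hmin⟩ := hgap.exists_minimizer hπ hπ1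
    have hlt := hrec.mul_varPi_lt_EForm hπ hπ1 hν hν0 hνn hlam hψ1 hmean hf
    exact lt_of_mul_lt_mul_right (hlt.trans_eq hmin) (varPi_pos hπ hπ1 hf).le

lemma piMean_nonpos_iff (hrec : PosPartRec n π ν lam ψ) (hn : 2 ≤ n)
    (hπ : ∀ i ∈ Icc 1 n, 0 < π i) (hπ1 : ∑ i ∈ Icc 1 n, π i = 1)
    (hν : ∀ i ∈ Icc 1 (n - 1), 0 < ν i) (hν0 : ν 0 = 0) (hνn : ν n = 0) (hlam : 0 < lam)
    (hψ1 : ψ 1 < 0) (hgap : IsSpectralGap n π ν gap) :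
    piMean n π ψ ≤ 0 ↔ lam ≤ gap := by
  constructor
  · intro hmean
    obtain ⟨f, hf, hmin⟩ := hgap.exists_minimizer hπ hπ1
    have hle := hrec.mul_varPi_le_EForm hπ hπ1 hν hν0 hνn hlam hψ1 hmean f
    exact le_of_mul_le_mul_right (hle.trans_eq hmin) (varPi_pos hπ hπ1 hf)
  · contrapose!
    intro hmean
    have hlast := hrec.piMean_lt_last hn hπ hπ1 hν hν0 hlam hψ1
    have hvar := varPi_pos hπ hπ1 (hrec.nonconstant hn hπ hν hν0 hlam hψ1)
    refine lt_of_mul_lt_mul_right ((hgap.mul_varPi_le_EForm hπ hπ1 ψ).trans_lt ?_) hvar.le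
    rw [hrec.EForm_self_eq hπ hν hν0 hνn hlam]
    exact sub_lt_self _ (mul_pos hlam (mul_pos hmean (sub_pos.2 hlast)))

lemma piMean_eq_zero_iff (hrec : PosPartRec n π ν lam ψ) (hn : 2 ≤ n)
    (hπ : ∀ i ∈ Icc 1 n, 0 < π i) (hπ1 : ∑ i ∈ Icc 1 n, π i = 1)
    (hν : ∀ i ∈ Icc 1 (n - 1), 0 < ν i) (hν0 : ν 0 = 0) (hνn : ν n = 0) (hlam : 0 < lam)
    (hψ1 : ψ 1 < 0) (hgap : IsSpectralGap n π ν gap) :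
    piMean n π ψ = 0 ↔ lam = gap := by
  rw [le_antisymm_iff, hrec.piMean_nonpos_iff hn hπ hπ1 hν hν0 hνn hlam hψ1 hgap,
    hrec.piMean_nonneg_iff hn hπ hπ1 hν hν0 hνn hlam hψ1 hgap, ← le_antisymm_iff]

lemma pred_last_lt_last_of_minimizer (hrec : PosPartRec n π ν lam ψ) (hn : 2 ≤ n)
    (hπ : ∀ i ∈ Icc 1 n, 0 < π i) (hπ1 : ∑ i ∈ Icc 1 n, π i = 1)
    (hν : ∀ i ∈ Icc 1 (n - 1), 0 < ν i) (hν0 : ν 0 = 0) (hνn : ν n = 0) (hlam : 0 < lam)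
    (hψ1 : ψ 1 < 0) (hgap : IsSpectralGap n π ν gap)
    (hmin : EForm n ν ψ ψ = gap * varPi n π ψ) : ψ (n - 1) < ψ n := by
  have hvar := varPi_pos hπ hπ1 (hrec.nonconstant hn hπ hν hν0 hlam hψ1)
  have hgap_pos : 0 < gap := by
    rw [← mul_pos_iff_of_pos_right hvar, ← hmin]
    exact EForm_self_pos hν (left_mem_Icc.2 (by omega))
      (hrec.one_lt_two hn hπ hν hν0 hlam hψ1).ne
  have hn_mem : n ∈ Icc 1 n := right_mem_Icc.2 (by omega)
  have hlast := sub_pos.2 (hrec.piMean_lt_last hn hπ hπ1 hν hν0 hlam hψ1)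
  have hflux : flux ν ψ (n - 1) = gap * (π n * (ψ n - piMean n π ψ)) := by
    have hflux_n : flux ν ψ n = 0 := by rw [flux, hνn, mul_zero]
    rw [← hgap.flux_sub_flux_of_minimizer hπ hπ1 hν0 hνn hmin hn_mem, hflux_n, sub_zero]
  have hflux_pos : 0 < flux ν ψ (n - 1) :=
    hflux ▸ mul_pos hgap_pos (mul_pos (hπ n hn_mem) hlast)
  rwa [flux_pos_iff (hν _ (right_mem_Icc.2 (by omega))), Nat.sub_add_cancel (by omega)]
    at hflux_pos

lemma eq_gap_of_minimizer (hrec : PosPartRec n π ν lam ψ) (hn : 3 ≤ n)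
    (hπ : ∀ i ∈ Icc 1 n, 0 < π i) (hπ1 : ∑ i ∈ Icc 1 n, π i = 1)
    (hν : ∀ i ∈ Icc 1 (n - 1), 0 < ν i) (hν0 : ν 0 = 0) (hνn : ν n = 0) (hlam : 0 < lam)
    (hψ1 : ψ 1 < 0) (hgap : IsSpectralGap n π ν gap)
    (hmin : EForm n ν ψ ψ = gap * varPi n π ψ) : lam = gap := by
  have hlast := hrec.pred_last_lt_last_of_minimizer (by omega) hπ hπ1 hν hν0 hνn hlam hψ1 hgap hmin
  have hbalance : ∀ i, 1 ≤ i → i < n → lam * ψ i = gap * (ψ i - piMean n π ψ) := by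
    intro i h1 hin
    have hi : i ∈ Icc 1 n := mem_Icc.2 ⟨h1, hin.le⟩
    have hne : ψ i ≠ ψ n :=
      ((hrec.monotoneOn hν ⟨h1, hin.le⟩ ⟨by omega, by omega⟩ (by omega)).trans_lt hlast).ne
    have hflux := (hrec.eq_last_or_flux_sub_flux hπ hν hν0 hlam hi).resolve_left hne
    rw [hgap.flux_sub_flux_of_minimizer hπ hπ1 hν0 hνn hmin hi] at hflux
    apply mul_left_cancel₀ (hπ i hi).ne'
    linarith
  have h12 : lam * (ψ 2 - ψ 1) = gap * (ψ 2 - ψ 1) := by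
    linarith [hbalance 1 le_rfl (by omega), hbalance 2 (by omega) (by omega)]
  exact mul_right_cancel₀
    (sub_pos.2 (hrec.one_lt_two (by omega) hπ hν hν0 hlam hψ1)).ne' h12

end PosPartRec

theorem stmt5 (n : ℕ) (hn : 2 ≤ n) (π ν : ℕ → ℝ)
    (hπ : ∀ i ∈ Finset.Icc 1 n, 0 < π i)
    (hπ1 : ∑ i ∈ Finset.Icc 1 n, π i = 1)
    (hν : ∀ i ∈ Finset.Icc 1 (n - 1), 0 < ν i)
    (hν0 : ν 0 = 0) (hνn : ν n = 0)
    (gap : ℝ) (hgap : IsSpectralGap n π ν gap)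
    (lam : ℝ) (hlam : 0 < lam)
    (ψ : ℕ → ℝ) (hψ1 : ψ 1 < 0)
    (hrec : PosPartRec n π ν lam ψ) :
    (EForm n ν ψ ψ = lam * varPi n π ψ ↔ piMean n π ψ = 0) ∧
    (piMean n π ψ = 0 ↔ lam = gap) ∧
    (3 ≤ n → (lam = gap ↔ EForm n ν ψ ψ = gap * varPi n π ψ)) := by
  have rayleigh_iff := hrec.EForm_self_eq_iff hn hπ hπ1 hν hν0 hνn hlam hψ1
  have gap_iff := hrec.piMean_eq_zero_iff hn hπ hπ1 hν hν0 hνn hlam hψ1 hgap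
  refine ⟨rayleigh_iff, gap_iff, fun h3 => ⟨?_, ?_⟩⟩
  · rintro rfl
    exact rayleigh_iff.2 (gap_iff.2 rfl)
  · exact hrec.eq_gap_of_minimizer h3 hπ hπ1 hν hν0 hνn hlam hψ1 hgap
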